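/- Let p, q > 0 and a ∈ ℝ, and let Δ_a be the Laplacian with vertical drift a on Sol(p,q). (i) If a > 0, then every bounded C² function h : ℝ³ → ℝ with Δ_a h = 0 has the form h(x,y,z) = h₂(y,−z), where h₂ : ℝ² → ℝ is a bounded C² function with Δ^{H(q)}_{−a} h₂ = 0. (ii) If a < 0, then every bounded C² function h : ℝ³ → ℝ with Δ_a h = 0 has the form h(x,y,z) = h₁(x,z), where h₁ : ℝ² → ℝ is a bounded C² function with Δ^{H(p)}_a h₁ = 0. -/

import Mathlib

open Real

/-- The Laplacian with vertical drift `a` on `Sol(p,q) ≡ ℝ³`: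
`Δ_a f = (1/2)(e^{2pz} f_xx + e^{−2qz} f_yy + f_zz) + a f_z`. -/
noncomputable def solLap (p q a : ℝ) (f : ℝ × ℝ × ℝ → ℝ) (w : ℝ × ℝ × ℝ) : ℝ :=
  (1/2) * (Real.exp (2*p*w.2.2) * iteratedDeriv 2 (fun t => f (t, w.2.1, w.2.2)) w.1
    + Real.exp (-(2*q*w.2.2)) * iteratedDeriv 2 (fun t => f (w.1, t, w.2.2)) w.2.1
    + iteratedDeriv 2 (fun t => f (w.1, w.2.1, t)) w.2.2)
  + a * deriv (fun t => f (w.1, w.2.1, t)) w.2.2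

/-- The hyperbolic Laplacian with drift `b` on the logarithmic model `H(r) ≡ ℝ²`:
`Δ^{H(r)}_b g = (1/2)(e^{2rz} g_xx + g_zz) + b g_z`. -/
noncomputable def hypLap (r b : ℝ) (g : ℝ × ℝ → ℝ) (w : ℝ × ℝ) : ℝ :=
  (1/2) * (Real.exp (2*r*w.2) * iteratedDeriv 2 (fun t => g (t, w.2)) w.1
    + iteratedDeriv 2 (fun t => g (w.1, t)) w.2)
  + b * deriv (fun t => g (w.1, t)) w.2

/-- Membership in `H⁺(Δ_a, λ)` on `Sol(p,q)`: strictly positive `C²` `λ`-eigenfunction. -/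
def IsSolEigen (p q a lam : ℝ) (h : ℝ × ℝ × ℝ → ℝ) : Prop :=
  ContDiff ℝ 2 h ∧ (∀ w, 0 < h w) ∧ ∀ w, solLap p q a h w = lam * h w

/-- A minimal element of `H⁺(Δ_a, λ)` on `Sol(p,q)`: value `1` at the origin, and any
element of `H⁺(Δ_a, λ)` dominated by it is a constant multiple of it. -/
def IsSolMinimal (p q a lam : ℝ) (h : ℝ × ℝ × ℝ → ℝ) : Prop :=
  IsSolEigen p q a lam h ∧ h (0, 0, 0) = 1 ∧
    ∀ f, IsSolEigen p q a lam f → (∀ w, f w ≤ h w) → ∃ c : ℝ, ∀ w, f w = c * h w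

/-- Membership in `H⁺(Δ^{H(r)}_b, λ)`: strictly positive `C²` `λ`-eigenfunction. -/
def IsHypEigen (r b lam : ℝ) (g : ℝ × ℝ → ℝ) : Prop :=
  ContDiff ℝ 2 g ∧ (∀ w, 0 < g w) ∧ ∀ w, hypLap r b g w = lam * g w

/-- A minimal element of `H⁺(Δ^{H(r)}_b, λ)`. -/
def IsHypMinimal (r b lam : ℝ) (g : ℝ × ℝ → ℝ) : Prop :=
  IsHypEigen r b lam g ∧ g (0, 0) = 1 ∧
    ∀ f, IsHypEigen r b lam f → (∀ w, f w ≤ g w) → ∃ c : ℝ, ∀ w, f w = c * g w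

/-! ### Calculus preliminaries -/

lemma iteratedDeriv_two_eq_of_hasDerivAt {f f' : ℝ → ℝ} {f'' x : ℝ}
    (h : ∀ᶠ t in nhds x, HasDerivAt f (f' t) t) (h' : HasDerivAt f' f'' x) :
    iteratedDeriv 2 f x = f'' := by
  rw [iteratedDeriv_succ, iteratedDeriv_one]
  have : deriv f =ᶠ[nhds x] f' := h.mono fun t ht => ht.deriv
  rw [this.deriv_eq, h'.deriv]

lemma IsLocalMax.iteratedDeriv_two_nonpos {f : ℝ → ℝ} {x : ℝ} (h : IsLocalMax f x)
    (hc : ContinuousAt f x) : iteratedDeriv 2 f x ≤ 0 := by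
  rw [iteratedDeriv_succ, iteratedDeriv_one]
  by_contra! hpos
  have hmin : IsLocalMin f x := isLocalMin_of_deriv_deriv_pos hpos h.deriv_eq_zero hc
  have hconst : f =ᶠ[nhds x] fun _ => f x := by
    filter_upwards [h, hmin] with t h₁ h₂ using le_antisymm h₁ h₂
  have hderiv := hconst.deriv.deriv_eq
  simp at hderiv
  exact hpos.ne' hderiv

/-! ### The operator `solLap` -/

section Slices

variable {f : ℝ × ℝ × ℝ → ℝ} {x y z : ℝ}

lemma ContDiffAt.slice_fst (hf : ContDiffAt ℝ 2 f (x, y, z)) :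
    ContDiffAt ℝ 2 (fun t => f (t, y, z)) x :=
  ContDiffAt.comp x (f := fun t : ℝ => (t, y, z)) hf (by fun_prop)

lemma ContDiffAt.slice_snd (hf : ContDiffAt ℝ 2 f (x, y, z)) :
    ContDiffAt ℝ 2 (fun t => f (x, t, z)) y :=
  ContDiffAt.comp y (f := fun t : ℝ => (x, t, z)) hf (by fun_prop)

lemma ContDiffAt.slice_thd (hf : ContDiffAt ℝ 2 f (x, y, z)) :
    ContDiffAt ℝ 2 (fun t => f (x, y, t)) z :=
  ContDiffAt.comp z (f := fun t : ℝ => (x, y, t)) hf (by fun_prop)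

lemma IsLocalMax.solLap_nonpos {p q a : ℝ} (hf : ContDiffAt ℝ 2 f (x, y, z))
    (h : IsLocalMax f (x, y, z)) : solLap p q a f (x, y, z) ≤ 0 := by
  have h₁ : IsLocalMax (fun t => f (t, y, z)) x :=
    IsLocalMax.comp_continuous (g := fun t : ℝ => (t, y, z)) (b := x) h (by fun_prop)
  have h₂ : IsLocalMax (fun t => f (x, t, z)) y :=
    IsLocalMax.comp_continuous (g := fun t : ℝ => (x, t, z)) (b := y) h (by fun_prop)
  have h₃ : IsLocalMax (fun t => f (x, y, t)) z :=
    IsLocalMax.comp_continuous (g := fun t : ℝ => (x, y, t)) (b := z) h (by fun_prop)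
  have d₁ := h₁.iteratedDeriv_two_nonpos hf.slice_fst.continuousAt
  have d₂ := h₂.iteratedDeriv_two_nonpos hf.slice_snd.continuousAt
  have d₃ := h₃.iteratedDeriv_two_nonpos hf.slice_thd.continuousAt
  have e₁ := mul_nonpos_of_nonneg_of_nonpos (exp_pos (2 * p * z)).le d₁
  have e₂ := mul_nonpos_of_nonneg_of_nonpos (exp_pos (-(2 * q * z))).le d₂
  simp only [solLap, h₃.deriv_eq_zero]
  linarith

lemma solLap_add {p q a : ℝ} {g : ℝ × ℝ × ℝ → ℝ} (hf : ContDiffAt ℝ 2 f (x, y, z))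
    (hg : ContDiffAt ℝ 2 g (x, y, z)) :
    solLap p q a (fun w => f w + g w) (x, y, z)
      = solLap p q a f (x, y, z) + solLap p q a g (x, y, z) := by
  simp only [solLap]
  rw [iteratedDeriv_fun_add hf.slice_fst hg.slice_fst,
    iteratedDeriv_fun_add hf.slice_snd hg.slice_snd,
    iteratedDeriv_fun_add hf.slice_thd hg.slice_thd,
    deriv_fun_add (hf.slice_thd.differentiableAt (by norm_num))
      (hg.slice_thd.differentiableAt (by norm_num))]
  ring

lemma solLap_const_mul {p q a : ℝ} (c : ℝ) (w : ℝ × ℝ × ℝ) :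
    solLap p q a (fun w => c * f w) w = c * solLap p q a f w := by
  simp only [solLap, iteratedDeriv_const_mul_field, deriv_const_mul_field]
  ring

end Slices

lemma solLap_translate (p q a m : ℝ) (f : ℝ × ℝ × ℝ → ℝ) (w : ℝ × ℝ × ℝ) :
    solLap p q a (fun w => f (m + w.1, w.2)) w = solLap p q a f (m + w.1, w.2) := by
  simp only [solLap]
  rw [iteratedDeriv_comp_const_add 2 (fun t => f (t, w.2.1, w.2.2))]

lemma solLap_reflect (p q a m : ℝ) (f : ℝ × ℝ × ℝ → ℝ) (w : ℝ × ℝ × ℝ) :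
    solLap p q a (fun w => f (m - w.1, w.2)) w = solLap p q a f (m - w.1, w.2) := by
  simp only [solLap]
  rw [iteratedDeriv_comp_const_sub 2 (fun t => f (t, w.2.1, w.2.2))]
  simp

lemma solLap_swap (p q a : ℝ) (f : ℝ × ℝ × ℝ → ℝ) (w : ℝ × ℝ × ℝ) :
    solLap q p (-a) (fun w => f (w.2.1, w.1, -w.2.2)) w
      = solLap p q a f (w.2.1, w.1, -w.2.2) := by
  simp only [solLap]
  rw [iteratedDeriv_comp_neg 2 (fun t => f (w.2.1, w.1, t)),
    deriv_comp_neg (fun t => f (w.2.1, w.1, t))]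
  simp
  ring

/-! ### The barrier -/

/-- A proper positive strict supersolution on the half-space `x ≥ 0`. -/
noncomputable def solBarrier (p q a l A : ℝ) (w : ℝ × ℝ × ℝ) : ℝ :=
  w.2.2 + (2 / p) * log (1 + l * w.1 * exp (-(p * w.2.2)))
    + exp (-(a * w.2.2)) * (A + log (1 + w.2.1 ^ 2 * exp (2 * q * w.2.2)))

section Barrier

variable {p q a l : ℝ} {w : ℝ × ℝ × ℝ}

lemma solLap_height (p q a : ℝ) (w : ℝ × ℝ × ℝ) : solLap p q a (fun w => w.2.2) w = a := by
  have h : iteratedDeriv 2 (fun t : ℝ => t) w.2.2 = 0 :=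
    iteratedDeriv_two_eq_of_hasDerivAt (f' := fun _ => 1)
      (Filter.Eventually.of_forall fun t => hasDerivAt_id t) (hasDerivAt_const _ _)
  simp [solLap, h, iteratedDeriv_const]

lemma solLap_logFst (hl : 0 < l) (hw : 0 < w.1) :
    solLap p q a (fun w => log (1 + l * w.1 * exp (-(p * w.2.2)))) w
      = (1 / 2) * (-l ^ 2 + p ^ 2 * (l * w.1 * exp (-(p * w.2.2)))
          - 2 * a * p * (l * w.1 * exp (-(p * w.2.2)))
            * (1 + l * w.1 * exp (-(p * w.2.2))))
        / (1 + l * w.1 * exp (-(p * w.2.2))) ^ 2 := by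
  obtain ⟨x, y, z⟩ := w
  simp only at hw
  have hpos : ∀ t, 0 < 1 + l * x * exp (-(p * t)) := fun t => by positivity
  have hexp : ∀ t, HasDerivAt (fun t => 1 + l * x * exp (-(p * t)))
      (l * x * (exp (-(p * t)) * (-p))) t := fun t => by
    have := (((hasDerivAt_id t).const_mul p).neg.exp.const_mul (l * x)).const_add 1
    simpa using this
  have hz : ∀ t, HasDerivAt (fun t => log (1 + l * x * exp (-(p * t))))
      (p / (1 + l * x * exp (-(p * t))) - p) t := fun t => by
    refine ((hexp t).log (hpos t).ne').congr_deriv ?_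
    field_simp [(hpos t).ne']
    ring
  have hzz : HasDerivAt (fun t => p / (1 + l * x * exp (-(p * t))) - p)
      (p ^ 2 * (l * x * exp (-(p * z))) / (1 + l * x * exp (-(p * z))) ^ 2) z := by
    refine (((hasDerivAt_const z p).fun_div (hexp z) (hpos z).ne').sub_const p).congr_deriv ?_
    ring
  have hlin : ∀ t, HasDerivAt (fun t => 1 + l * t * exp (-(p * z)))
      (l * exp (-(p * z))) t := fun t => by
    have := (((hasDerivAt_id t).const_mul l).mul_const (exp (-(p * z)))).const_add 1
    simpa using this
  have hxev : ∀ᶠ t in nhds x, HasDerivAt (fun t => log (1 + l * t * exp (-(p * z))))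
      (l * exp (-(p * z)) / (1 + l * t * exp (-(p * z)))) t := by
    filter_upwards [Ioi_mem_nhds hw] with t ht
    have ht : 0 < t := ht
    exact (hlin t).log (by positivity)
  have hxx : HasDerivAt (fun t => l * exp (-(p * z)) / (1 + l * t * exp (-(p * z))))
      (-(l * exp (-(p * z))) ^ 2 / (1 + l * x * exp (-(p * z))) ^ 2) x := by
    refine ((hasDerivAt_const x (l * exp (-(p * z)))).fun_div (hlin x)
      (hpos z).ne').congr_deriv ?_
    ring
  simp only [solLap]
  rw [iteratedDeriv_two_eq_of_hasDerivAt hxev hxx,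
    iteratedDeriv_two_eq_of_hasDerivAt (Filter.Eventually.of_forall hz) hzz, (hz z).deriv]
  have h2 : exp (2 * p * z) * (exp (-(p * z))) ^ 2 = 1 := by
    rw [← exp_nat_mul, ← exp_add]
    simp
    ring
  have h3 : exp (2 * p * z) * (-(l * exp (-(p * z))) ^ 2 / (1 + l * x * exp (-(p * z))) ^ 2)
      = -l ^ 2 / (1 + l * x * exp (-(p * z))) ^ 2 := by
    rw [← mul_div_assoc]
    congr 1
    linear_combination (-l ^ 2) * h2
  rw [h3]
  have := (hpos z).ne'
  simp [iteratedDeriv_const]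
  field_simp
  ring

lemma solLap_expLogSnd (p q a A : ℝ) (w : ℝ × ℝ × ℝ) :
    solLap p q a (fun w => exp (-(a * w.2.2)) *
        (A + log (1 + w.2.1 ^ 2 * exp (2 * q * w.2.2)))) w
      = (1 / 2) * exp (-(a * w.2.2)) *
        ((2 - 2 * (w.2.1 ^ 2 * exp (2 * q * w.2.2))
            + 4 * q ^ 2 * (w.2.1 ^ 2 * exp (2 * q * w.2.2)))
          / (1 + w.2.1 ^ 2 * exp (2 * q * w.2.2)) ^ 2
          - a ^ 2 * (A + log (1 + w.2.1 ^ 2 * exp (2 * q * w.2.2)))) := by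
  obtain ⟨x, y, z⟩ := w
  have hpos : ∀ s t, 0 < 1 + s ^ 2 * exp (2 * q * t) := fun s t => by positivity
  have hexpa : ∀ t, HasDerivAt (fun t => exp (-(a * t))) (-a * exp (-(a * t))) t := fun t => by
    have := ((hasDerivAt_id t).const_mul a).neg.exp
    simpa [mul_comm] using this
  have hexp : ∀ t, HasDerivAt (fun t => 1 + y ^ 2 * exp (2 * q * t))
      (y ^ 2 * (exp (2 * q * t) * (2 * q))) t := fun t => by
    have := (((hasDerivAt_id t).const_mul (2 * q)).exp.const_mul (y ^ 2)).const_add 1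
    simpa using this
  have hlog : ∀ t, HasDerivAt (fun t => log (1 + y ^ 2 * exp (2 * q * t)))
      (2 * q - 2 * q / (1 + y ^ 2 * exp (2 * q * t))) t := fun t => by
    refine ((hexp t).log (hpos y t).ne').congr_deriv ?_
    field_simp [(hpos y t).ne']
    ring
  have hlog' : HasDerivAt (fun t => 2 * q - 2 * q / (1 + y ^ 2 * exp (2 * q * t)))
      (4 * q ^ 2 * (y ^ 2 * exp (2 * q * z)) / (1 + y ^ 2 * exp (2 * q * z)) ^ 2) z := by
    refine (((hasDerivAt_const z (2 * q)).fun_div (hexp z) (hpos y z).ne').const_sub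
      (2 * q)).congr_deriv ?_
    ring
  have hz : ∀ t, HasDerivAt
      (fun t => exp (-(a * t)) * (A + log (1 + y ^ 2 * exp (2 * q * t)))) _ t := fun t =>
    (hexpa t).fun_mul ((hlog t).const_add A)
  have hzz := ((hexpa z).const_mul (-a)).fun_mul ((hlog z).const_add A)
  have hzz' := hzz.fun_add ((hexpa z).fun_mul hlog')
  have hsq : ∀ t, HasDerivAt (fun t => 1 + t ^ 2 * exp (2 * q * z))
      (2 * t * exp (2 * q * z)) t := fun t => by
    have := (((hasDerivAt_id t).pow 2).mul_const (exp (2 * q * z))).const_add 1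
    simpa using this
  have hy : ∀ t, HasDerivAt
      (fun t => exp (-(a * z)) * (A + log (1 + t ^ 2 * exp (2 * q * z)))) _ t := fun t =>
    (((hsq t).log (hpos t z).ne').const_add A).const_mul (exp (-(a * z)))
  have hyy := ((((hasDerivAt_id' y).const_mul 2).mul_const (exp (2 * q * z))).fun_div (hsq y)
    (hpos y z).ne').const_mul (exp (-(a * z)))
  simp only [solLap]
  rw [iteratedDeriv_two_eq_of_hasDerivAt (Filter.Eventually.of_forall hy) hyy,
    iteratedDeriv_two_eq_of_hasDerivAt (Filter.Eventually.of_forall hz) hzz', (hz z).deriv]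
  have h2 : exp (-(2 * q * z)) = (exp (2 * q * z))⁻¹ := exp_neg _
  have hE := (exp_pos (2 * q * z)).ne'
  have hD := (hpos y z).ne'
  rw [h2]
  simp [iteratedDeriv_const]
  field_simp
  ring

lemma contDiffAt_logFst (hl : 0 < l) (hw : 0 ≤ w.1) :
    ContDiffAt ℝ 2 (fun w : ℝ × ℝ × ℝ => log (1 + l * w.1 * exp (-(p * w.2.2)))) w :=
  ContDiffAt.log (by fun_prop) (by positivity)

lemma contDiff_expLogSnd (q a A : ℝ) :
    ContDiff ℝ 2 (fun w : ℝ × ℝ × ℝ => exp (-(a * w.2.2)) *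
        (A + log (1 + w.2.1 ^ 2 * exp (2 * q * w.2.2)))) := by
  refine ContDiff.mul (by fun_prop) (contDiff_const.add (ContDiff.log (by fun_prop) fun w => ?_))
  positivity

lemma contDiffAt_solBarrier (A : ℝ) (hl : 0 < l) (hw : 0 ≤ w.1) :
    ContDiffAt ℝ 2 (solBarrier p q a l A) w := by
  unfold solBarrier
  refine ContDiffAt.add (ContDiffAt.add (by fun_prop) ?_) (contDiff_expLogSnd q a A).contDiffAt
  exact contDiffAt_const.mul (contDiffAt_logFst hl hw)

lemma solLap_solBarrier_neg (hp : 0 < p) (ha : 0 < a) (hl : 0 < l)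
    (hl2 : l ^ 2 = p * (a + p ^ 2 / (4 * a))) {A : ℝ} (hA : 2 + 4 * q ^ 2 < a ^ 2 * A)
    (hw : 0 < w.1) : solLap p q a (solBarrier p q a l A) w < 0 := by
  have hf₁ : ContDiffAt ℝ 2 (fun w : ℝ × ℝ × ℝ => w.2.2) w := by fun_prop
  have hf₂ : ContDiffAt ℝ 2
      (fun w : ℝ × ℝ × ℝ => (2 / p) * log (1 + l * w.1 * exp (-(p * w.2.2)))) w :=
    contDiffAt_const.mul (contDiffAt_logFst hl hw.le)
  have key : solLap p q a (solBarrier p q a l A) w = _ :=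
    (solLap_add (hf₁.add hf₂) (contDiff_expLogSnd q a A).contDiffAt).trans
      (congrArg (· + _) (solLap_add hf₁ hf₂))
  rw [key, solLap_height, solLap_const_mul, solLap_logFst hl hw, solLap_expLogSnd]
  obtain ⟨x, y, z⟩ := w
  simp only at hw ⊢
  have hE : 0 < l * x * exp (-(p * z)) := by positivity
  have hD : 0 ≤ y ^ 2 * exp (2 * q * z) := by positivity
  set E := l * x * exp (-(p * z))
  set D := y ^ 2 * exp (2 * q * z)
  have h₁ : a + 2 / p * (1 / 2 * (-l ^ 2 + p ^ 2 * E - 2 * a * p * E * (1 + E)) / (1 + E) ^ 2)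
      ≤ 0 := by
    have : a + 2 / p * (1 / 2 * (-l ^ 2 + p ^ 2 * E - 2 * a * p * E * (1 + E)) / (1 + E) ^ 2)
        = -(a * (E - p / (2 * a)) ^ 2) / (1 + E) ^ 2 := by
      rw [hl2]
      field_simp
      ring
    rw [this]
    exact div_nonpos_of_nonpos_of_nonneg (by nlinarith [sq_nonneg (E - p / (2 * a))])
      (by positivity)
  have h₂ : (2 - 2 * D + 4 * q ^ 2 * D) / (1 + D) ^ 2 ≤ 2 + 4 * q ^ 2 := by
    rw [div_le_iff₀ (by positivity)]
    have h₃ := mul_nonneg (sq_nonneg q) hD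
    have h₄ := mul_nonneg (sq_nonneg q) (sq_nonneg D)
    nlinarith [sq_nonneg q, sq_nonneg D]
  have h₃ : 0 ≤ log (1 + D) := log_nonneg (by linarith)
  have h₄ : (2 - 2 * D + 4 * q ^ 2 * D) / (1 + D) ^ 2 - a ^ 2 * (A + log (1 + D)) < 0 := by
    nlinarith [mul_nonneg (sq_nonneg a) h₃]
  have h₅ := mul_neg_of_pos_of_neg (half_pos (exp_pos (-(a * z)))) h₄
  linarith

lemma height_add_exp_nonneg (ha : 0 < a) (z : ℝ) : 0 ≤ z + exp (-(a * z)) * (1 / a) := by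
  have h := add_one_le_exp (-(a * z))
  have : z = -(-(a * z) * (1 / a)) := by field_simp
  nlinarith [one_div_pos.2 ha]

lemma solBarrier_nonneg (hp : 0 < p) (ha : 0 < a) (hl : 0 < l) {A : ℝ} (hA : 1 / a ≤ A)
    (hw : 0 ≤ w.1) : 0 ≤ solBarrier p q a l A w := by
  have h₁ := height_add_exp_nonneg ha w.2.2
  have h₂ : 0 ≤ 2 / p * log (1 + l * w.1 * exp (-(p * w.2.2))) :=
    mul_nonneg (by positivity) (log_nonneg (le_add_of_nonneg_right (by positivity)))
  have h₃ : 0 ≤ log (1 + w.2.1 ^ 2 * exp (2 * q * w.2.2)) :=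
    log_nonneg (le_add_of_nonneg_right (by positivity))
  have h₄ := mul_le_mul_of_nonneg_left (show 1 / a ≤ A + log (1 + w.2.1 ^ 2 *
    exp (2 * q * w.2.2)) by linarith) (exp_pos (-(a * w.2.2))).le
  unfold solBarrier
  linarith

lemma exists_box_of_solBarrier_le (hp : 0 < p) (hq : 0 < q) (ha : 0 < a) (hl : 0 < l) {A : ℝ}
    (hA : 1 / a < A) (K : ℝ) :
    ∃ b c : ℝ × ℝ × ℝ, b.1 = 0 ∧
      ∀ w : ℝ × ℝ × ℝ, 0 ≤ w.1 → solBarrier p q a l A w ≤ K → w ∈ Set.Icc b c := by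
  set L := (1 - K / (A - 1 / a)) / a with hL
  set Y := exp (K * exp (a * K)) * exp (-(2 * q * L)) with hY
  refine ⟨(0, -(1 + Y), L), (exp (p / 2 * K) * exp (p * K) / l, 1 + Y, K), rfl, ?_⟩
  rintro ⟨x, y, z⟩ hx hK
  simp only [solBarrier] at hx hK
  have h₁ := height_add_exp_nonneg ha z
  have hea := exp_pos (-(a * z))
  have hlogx : 0 ≤ log (1 + l * x * exp (-(p * z))) :=
    log_nonneg (le_add_of_nonneg_right (by positivity))
  have h₂ : 0 ≤ 2 / p * log (1 + l * x * exp (-(p * z))) := mul_nonneg (by positivity) hlogx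
  have hlogy : 0 ≤ log (1 + y ^ 2 * exp (2 * q * z)) :=
    log_nonneg (le_add_of_nonneg_right (by positivity))
  have h₃ : 0 ≤ exp (-(a * z)) * log (1 + y ^ 2 * exp (2 * q * z)) :=
    mul_nonneg hea.le hlogy
  have hA' : 0 < A - 1 / a := by linarith
  have h₄ : 0 < exp (-(a * z)) * (A - 1 / a) := mul_pos hea hA'
  have ha' : 0 < exp (-(a * z)) * (1 / a) := by positivity
  have hzK : z ≤ K := by nlinarith
  have hK0 : 0 ≤ K := by nlinarith
  have hLz : L ≤ z := by
    have h₅ : exp (-(a * z)) ≤ K / (A - 1 / a) := by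
      rw [le_div_iff₀ hA']
      nlinarith
    have h₆ := add_one_le_exp (-(a * z))
    rw [hL, div_le_iff₀ ha]
    linarith
  have hxle : x ≤ exp (p / 2 * K) * exp (p * K) / l := by
    have h₅ : log (1 + l * x * exp (-(p * z))) ≤ p / 2 * K := by
      have : 2 / p * log (1 + l * x * exp (-(p * z))) ≤ K := by nlinarith
      calc _ = p / 2 * (2 / p * log (1 + l * x * exp (-(p * z)))) := by field_simp
        _ ≤ _ := by gcongr
    have h₆ := (log_le_iff_le_exp (by positivity)).1 h₅
    have h₇ : exp (-(p * K)) ≤ exp (-(p * z)) := by gcongr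
    have h₈ : l * x * exp (-(p * K)) ≤ exp (p / 2 * K) :=
      (mul_le_mul_of_nonneg_left h₇ (by positivity)).trans (by linarith)
    rw [le_div_iff₀ hl]
    rw [exp_neg, ← div_eq_mul_inv, div_le_iff₀ (exp_pos _)] at h₈
    linarith
  have hyle : y ^ 2 ≤ Y := by
    have h₅ : log (1 + y ^ 2 * exp (2 * q * z)) ≤ K * exp (a * K) := by
      have h₆ : exp (-(a * z)) * log (1 + y ^ 2 * exp (2 * q * z)) ≤ K := by nlinarith
      calc _ = exp (-(a * z)) * log (1 + y ^ 2 * exp (2 * q * z)) * exp (a * z) := by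
            rw [exp_neg]
            field_simp
        _ ≤ K * exp (a * K) := by gcongr
    have h₆ := (log_le_iff_le_exp (by positivity)).1 h₅
    have h₇ : exp (2 * q * L) ≤ exp (2 * q * z) := by gcongr
    have h₈ : y ^ 2 * exp (2 * q * L) ≤ exp (K * exp (a * K)) :=
      (mul_le_mul_of_nonneg_left h₇ (by positivity)).trans (by linarith)
    rwa [hY, exp_neg, ← div_eq_mul_inv, le_div_iff₀ (exp_pos _)]
  exact ⟨⟨hx, by nlinarith, hLz⟩, ⟨hxle, by nlinarith, hzK⟩⟩

end Barrier

/-! ### The maximum principle and invariance in `x` -/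

/-- Phragmén–Lindelöf principle on the half-space `x ≥ 0`. -/
lemma nonpos_of_solLap_eq_zero {p q a : ℝ} (hp : 0 < p) (hq : 0 < q) (ha : 0 < a)
    {u : ℝ × ℝ × ℝ → ℝ} (hu : ContDiff ℝ 2 u) {B : ℝ} (hB : ∀ w, u w ≤ B)
    (hL : ∀ w, solLap p q a u w = 0) (h0 : ∀ v, u (0, v) = 0) {w : ℝ × ℝ × ℝ}
    (hw : 0 ≤ w.1) : u w ≤ 0 := by
  have hr : 0 < p * (a + p ^ 2 / (4 * a)) := by positivity
  obtain ⟨l, hl, hl2⟩ : ∃ l : ℝ, 0 < l ∧ l ^ 2 = p * (a + p ^ 2 / (4 * a)) :=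
    ⟨√(p * (a + p ^ 2 / (4 * a))), sqrt_pos.2 hr, sq_sqrt hr.le⟩
  obtain ⟨A, hA₁, hA₂⟩ : ∃ A : ℝ, 1 / a < A ∧ 2 + 4 * q ^ 2 < a ^ 2 * A := by
    refine ⟨1 / a + (2 + 4 * q ^ 2) / a ^ 2, lt_add_of_pos_right _ (by positivity), ?_⟩
    have : a ^ 2 * (1 / a + (2 + 4 * q ^ 2) / a ^ 2) = a + (2 + 4 * q ^ 2) := by field_simp
    linarith
  set Φ := solBarrier p q a l A with hΦ
  have hΦ0 : ∀ {v : ℝ × ℝ × ℝ}, 0 ≤ v.1 → 0 ≤ Φ v := solBarrier_nonneg hp ha hl hA₁.le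
  suffices H : ∀ ε > 0, u w ≤ ε * Φ w by
    have hlim : Filter.Tendsto (fun ε => ε * Φ w) (nhdsWithin 0 (Set.Ioi 0)) (nhds 0) := by
      have : Filter.Tendsto (fun ε => ε * Φ w) (nhds 0) (nhds (0 * Φ w)) :=
        (continuous_id.mul continuous_const).tendsto 0
      rw [zero_mul] at this
      exact this.mono_left nhdsWithin_le_nhds
    exact ge_of_tendsto hlim (Filter.eventually_of_mem self_mem_nhdsWithin H)
  intro ε hε
  by_contra! hlt
  obtain ⟨b, c, hb, hbox⟩ := exists_box_of_solBarrier_le hp hq ha hl hA₁ (B / ε)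
  have hmem : ∀ v : ℝ × ℝ × ℝ, 0 ≤ v.1 → 0 < u v + -ε * Φ v → v ∈ Set.Icc b c := by
    intro v hv hpos
    refine hbox v hv ?_
    rw [le_div_iff₀ hε]
    linarith [hB v]
  have hΦd : ∀ {v : ℝ × ℝ × ℝ}, 0 ≤ v.1 → ContDiffAt ℝ 2 (fun v => -ε * Φ v) v := fun hv =>
    contDiffAt_const.mul (contDiffAt_solBarrier A hl hv)
  have hcont : ContinuousOn (fun v => u v + -ε * Φ v) (Set.Icc b c) := fun v hv =>
    (hu.contDiffAt.add (hΦd (hb ▸ hv.1.1))).continuousAt.continuousWithinAt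
  have hwmem := hmem w hw (by linarith)
  obtain ⟨m, hm, hmax⟩ := isCompact_Icc.exists_isMaxOn ⟨w, hwmem⟩ hcont
  have hmpos : 0 < u m + -ε * Φ m := lt_of_lt_of_le (by linarith) (hmax hwmem)
  have hm0 : 0 ≤ m.1 := hb ▸ hm.1.1
  have hm1 : 0 < m.1 := by
    refine lt_of_le_of_ne hm0 fun h => ?_
    have : u m = 0 := by
      rw [← h0 m.2, h]
    nlinarith [hΦ0 hm0]
  have hloc : IsLocalMax (fun v => u v + -ε * Φ v) m := by
    filter_upwards [(isOpen_Ioi.preimage continuous_fst).mem_nhds (x := m) hm1] with v hv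
    by_cases hpos : 0 < u v + -ε * Φ v
    · exact hmax (hmem v (le_of_lt hv) hpos)
    · exact (not_lt.1 hpos).trans hmpos.le
  have hle := hloc.solLap_nonpos (p := p) (q := q) (a := a) (hu.contDiffAt.add (hΦd hm0))
  rw [solLap_add hu.contDiffAt (hΦd hm0), hL, solLap_const_mul] at hle
  nlinarith [solLap_solBarrier_neg hp ha hl hl2 hA₂ hm1]

lemma reflect_le_of_solLap_eq_zero {p q a : ℝ} (hp : 0 < p) (hq : 0 < q) (ha : 0 < a)
    {h : ℝ × ℝ × ℝ → ℝ} (hh : ContDiff ℝ 2 h) {C : ℝ} (hC : ∀ w, |h w| ≤ C)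
    (hL : ∀ w, solLap p q a h w = 0) (m : ℝ) {w : ℝ × ℝ × ℝ} (hw : 0 ≤ w.1) :
    h (m + w.1, w.2) ≤ h (m - w.1, w.2) := by
  have h₁ : ContDiff ℝ 2 (fun w : ℝ × ℝ × ℝ => h (m + w.1, w.2)) :=
    hh.comp (by fun_prop)
  have h₂ : ContDiff ℝ 2 (fun w : ℝ × ℝ × ℝ => -1 * h (m - w.1, w.2)) :=
    contDiff_const.mul (hh.comp (by fun_prop))
  have := nonpos_of_solLap_eq_zero hp hq ha (h₁.add h₂) (B := C + C)
    (fun w => by linarith [(abs_le.1 (hC (m + w.1, w.2))).2, (abs_le.1 (hC (m - w.1, w.2))).1])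
    (fun w => by
      refine (solLap_add h₁.contDiffAt h₂.contDiffAt).trans ?_
      rw [solLap_const_mul, solLap_translate, solLap_reflect, hL, hL]
      ring)
    (fun v => by simp) hw
  linarith

lemma eq_of_solLap_eq_zero {p q a : ℝ} (hp : 0 < p) (hq : 0 < q) (ha : 0 < a)
    {h : ℝ × ℝ × ℝ → ℝ} (hh : ContDiff ℝ 2 h) {C : ℝ} (hC : ∀ w, |h w| ≤ C)
    (hL : ∀ w, solLap p q a h w = 0) (x x' : ℝ) (v : ℝ × ℝ) : h (x, v) = h (x', v) := by
  wlog hx : x' ≤ x generalizing x x'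
  · exact (this x' x (le_of_not_ge hx)).symm
  have hs : 0 ≤ ((x - x') / 2, v).1 := by
    simp only
    linarith
  have e₁ : (x + x') / 2 + (x - x') / 2 = x := by ring
  have e₂ : (x + x') / 2 - (x - x') / 2 = x' := by ring
  have h₁ := reflect_le_of_solLap_eq_zero hp hq ha hh hC hL ((x + x') / 2) hs
  have h₂ := reflect_le_of_solLap_eq_zero hp hq ha (h := fun w => -1 * h w)
    (contDiff_const.mul hh) (C := C) (fun w => by simpa using hC w)
    (fun w => by rw [solLap_const_mul, hL, mul_zero]) ((x + x') / 2) hs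
  simp only [e₁, e₂] at h₁ h₂
  linarith

lemma hypLap_of_solLap {p q a : ℝ} {h : ℝ × ℝ × ℝ → ℝ}
    (hinv : ∀ x x' v, h (x, v) = h (x', v)) (x : ℝ) (u : ℝ × ℝ) :
    hypLap q (-a) (fun u => h (x, u.1, -u.2)) u = solLap p q a h (x, u.1, -u.2) := by
  have hconst : (fun t => h (t, u.1, -u.2)) = fun _ => h (x, u.1, -u.2) :=
    funext fun t => hinv t x _
  simp only [hypLap, solLap, hconst]
  rw [iteratedDeriv_comp_neg 2 (fun t => h (x, u.1, t)),
    deriv_comp_neg (fun t => h (x, u.1, t))]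
  simp [iteratedDeriv_const]

/-- With upward drift, bounded harmonic functions factor through the second hyperbolic plane. -/
lemma exists_hyp_of_solLap_eq_zero {p q a : ℝ} (hp : 0 < p) (hq : 0 < q) (ha : 0 < a)
    {h : ℝ × ℝ × ℝ → ℝ} (hh : ContDiff ℝ 2 h) (hC : ∃ C : ℝ, ∀ w, |h w| ≤ C)
    (hL : ∀ w, solLap p q a h w = 0) :
    ∃ h₂ : ℝ × ℝ → ℝ, ContDiff ℝ 2 h₂ ∧ (∃ C : ℝ, ∀ u, |h₂ u| ≤ C) ∧
      (∀ u, hypLap q (-a) h₂ u = 0) ∧ ∀ w : ℝ × ℝ × ℝ, h w = h₂ (w.2.1, -w.2.2) := by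
  obtain ⟨C, hC⟩ := hC
  have hinv := eq_of_solLap_eq_zero hp hq ha hh hC hL
  refine ⟨fun u => h (0, u.1, -u.2), hh.comp (by fun_prop), ⟨C, fun u => hC _⟩, fun u => ?_,
    fun w => ?_⟩
  · rw [hypLap_of_solLap (p := p) hinv, hL]
  · simpa using hinv w.1 0 w.2

theorem bounded_harmonic_structure (p q a : ℝ) (hp : 0 < p) (hq : 0 < q) :
    (0 < a →
      ∀ h : ℝ × ℝ × ℝ → ℝ, ContDiff ℝ 2 h → (∃ C : ℝ, ∀ w, |h w| ≤ C) →
        (∀ w, solLap p q a h w = 0) →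
        ∃ h₂ : ℝ × ℝ → ℝ, ContDiff ℝ 2 h₂ ∧ (∃ C : ℝ, ∀ u, |h₂ u| ≤ C) ∧
          (∀ u, hypLap q (-a) h₂ u = 0) ∧ ∀ w : ℝ × ℝ × ℝ, h w = h₂ (w.2.1, -w.2.2))
    ∧
    (a < 0 →
      ∀ h : ℝ × ℝ × ℝ → ℝ, ContDiff ℝ 2 h → (∃ C : ℝ, ∀ w, |h w| ≤ C) →
        (∀ w, solLap p q a h w = 0) →
        ∃ h₁ : ℝ × ℝ → ℝ, ContDiff ℝ 2 h₁ ∧ (∃ C : ℝ, ∀ u, |h₁ u| ≤ C) ∧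
          (∀ u, hypLap p a h₁ u = 0) ∧ ∀ w : ℝ × ℝ × ℝ, h w = h₁ (w.1, w.2.2)) := by
  refine ⟨fun ha h hh hC hL => exists_hyp_of_solLap_eq_zero hp hq ha hh hC hL,
    fun ha h hh ⟨C, hC⟩ hL => ?_⟩
  obtain ⟨h₁, hd, hb, hlap, heq⟩ := exists_hyp_of_solLap_eq_zero hq hp (neg_pos.2 ha)
    (h := fun w => h (w.2.1, w.1, -w.2.2)) (hh.comp (by fun_prop)) ⟨C, fun w => hC _⟩
    (fun w => by rw [solLap_swap, hL])
  refine ⟨h₁, hd, hb, by simpa using hlap, fun w => ?_⟩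
  simpa using heq (w.2.1, w.1, -w.2.2)
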